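/- Let G be a simple graph on Fin N, K ≠ 0 a real number, ω : Fin N → ℝ, and let θ : Fin N → ℝ be a completely degenerate equilibrium of the non-identical Kuramoto system with coupling K and frequencies ω. Then for every vertex k there exists an integer m with ω k = m·K. -/

import Mathlib

open Real

open Classical in
/-- Adjacency indicator: `1` if `j` and `k` are adjacent in `G`, `0` otherwise. -/
noncomputable def adjInd {V : Type*} (G : SimpleGraph V) (j k : V) : ℝ :=
  if G.Adj j k then 1 else 0

/-- A completely degenerate equilibrium of the identical Kuramoto system on `G`. -/
def IsCDE {V : Type*} [Fintype V] (G : SimpleGraph V) (θ : V → ℝ) : Prop :=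
  (∀ k, ∑ j, adjInd G j k * Real.sin (θ j - θ k) = 0) ∧
  (∀ j k, G.Adj j k → Real.cos (θ j - θ k) = 0)

/-- A completely degenerate equilibrium of the non-identical Kuramoto system with coupling
`K` and intrinsic frequencies `ω`. -/
def IsCDENonId {N : ℕ} (G : SimpleGraph (Fin N)) (K : ℝ) (ω θ : Fin N → ℝ) : Prop :=
  (∀ k, ω k + K * ∑ j, adjInd G j k * Real.sin (θ j - θ k) = 0) ∧
  (∀ j k, G.Adj j k → Real.cos (θ j - θ k) = 0)

/-- at a completely degenerate equilibrium of the non-identical system with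
coupling `K ≠ 0`, every intrinsic frequency is an integer multiple of `K`. -/
theorem stmt14 {N : ℕ} (G : SimpleGraph (Fin N)) (K : ℝ) (hK : K ≠ 0)
    (ω θ : Fin N → ℝ) (h : IsCDENonId G K ω θ) :
    ∀ k : Fin N, ∃ m : ℤ, ω k = (m : ℝ) * K := by
  intro k
  have key : ∀ j, ∃ m : ℤ, adjInd G j k * Real.sin (θ j - θ k) = (m : ℝ) := by
    intro j
    by_cases hjk : G.Adj j k
    · rcases Real.cos_eq_zero_iff_sin_eq.mp (h.2 j k hjk) with hs | hs
      · exact ⟨1, by simp [adjInd, hjk, hs]⟩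
      · exact ⟨-1, by simp [adjInd, hjk, hs]⟩
    · exact ⟨0, by simp [adjInd, hjk]⟩
  choose m hm using key
  refine ⟨-∑ j, m j, ?_⟩
  have h1 := h.1 k
  simp only [hm] at h1
  push_cast
  linarith
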